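/- arXiv:2010.14686 — 3 statements merged into one kernel-verified Lean document; each statement's English description precedes it below -/
import Mathlib

section
/- Let β > 1 be a non-integral real number whose beta-expansion b(β) = (b_1 b_2 b_3 ⋯) is not eventually periodic. Then the two-sided Beta-shift X̂_β is a coded shift with unique representation G_β = { b_1 ⋯ b_j i : j ≥ 1, 0 ≤ i < b_{j+1} } ∪ { i : 0 ≤ i < b_1 }; that is, X̂_β is the closure of the set of bi-infinite concatenations of words of G_β, and every such concatenation admits exactly one parsing into words of G_β. -/
open Filter MeasureTheory Topology
open scoped BigOperators ENNReal

noncomputable section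

namespace PaperStmt

/-- The full two-sided shift: bi-infinite sequences over the alphabet `Fin d`. -/
abbrev FullShift (d : ℕ) := ℤ → Fin d

/-- The (left) shift map `f(x)_k = x_{k+1}`. -/
def shift (d : ℕ) : FullShift d → FullShift d := fun x k => x (k + 1)

/-- A (two-sided) shift space: a nonempty closed shift-invariant subset. -/
def IsShiftSpace {d : ℕ} (X : Set (FullShift d)) : Prop :=
  X.Nonempty ∧ IsClosed X ∧ shift d '' X = X

/-- The cylinder at position `0` determined by a word `w` of length `n`. -/
def cyl {d n : ℕ} (w : Fin n → Fin d) : Set (FullShift d) :=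
  {x | ∀ i : Fin n, x ((i : ℕ) : ℤ) = w i}

/-- The language of `X` in length `n`: words of length `n` occurring in elements of `X`
(at position `0`; for shift-invariant `X` this is occurrence anywhere). -/
def langSet {d : ℕ} (X : Set (FullShift d)) (n : ℕ) : Set (Fin n → Fin d) :=
  {w | (X ∩ cyl w).Nonempty}

/-- Birkhoff sum `S_n φ`. -/
def birkhoff {d : ℕ} (φ : FullShift d → ℝ) (n : ℕ) (x : FullShift d) : ℝ :=
  ∑ k ∈ Finset.range n, φ ((shift d)^[k] x)

open Classical in
/-- The `n`-th partition function `Z_n(φ)` of `X`. -/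
def Zfun {d : ℕ} (X : Set (FullShift d)) (φ : FullShift d → ℝ) (n : ℕ) : ℝ :=
  ∑ w : Fin n → Fin d,
    if (X ∩ cyl w).Nonempty then Real.exp (sSup (birkhoff φ n '' (X ∩ cyl w))) else 0

/-- Topological pressure `P_top(X,φ) = lim (1/n) log Z_n(φ) = inf_n (1/n) log Z_n(φ)`. -/
def pressure {d : ℕ} (X : Set (FullShift d)) (φ : FullShift d → ℝ) : ℝ :=
  ⨅ n : ℕ, (1 / (n + 1 : ℝ)) * Real.log (Zfun X φ (n + 1))

/-- Topological entropy `h_top(X) = inf_n (1/n) log |L(X,n)|`. -/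
def entTop {d : ℕ} (X : Set (FullShift d)) : ℝ :=
  ⨅ n : ℕ, (1 / (n + 1 : ℝ)) * Real.log ((langSet X (n + 1)).ncard : ℝ)

/-- The shift-invariant Borel probability measures giving `X` full measure. -/
def InvProb {d : ℕ} (X : Set (FullShift d)) : Set (Measure (FullShift d)) :=
  {μ | IsProbabilityMeasure μ ∧ μ.map (shift d) = μ ∧ μ X = 1}

/-- Measure-theoretic (Kolmogorov–Sinai) entropy of an invariant measure,
computed via cylinder sets: `h_μ = lim -(1/n) Σ_{|w|=n} μ[w] log μ[w]`. -/
def mEnt {d : ℕ} (μ : Measure (FullShift d)) : ℝ :=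
  Filter.liminf
    (fun n : ℕ => (1 / (n + 1 : ℝ)) *
      ∑ w : Fin (n + 1) → Fin d, Real.negMulLog (μ (cyl w)).toReal)
    Filter.atTop

/-- The free energy `h_μ(f) + ∫ φ dμ` of an invariant measure. -/
def freeEnergy {d : ℕ} (μ : Measure (FullShift d)) (φ : FullShift d → ℝ) : ℝ :=
  mEnt μ + ∫ x, φ x ∂μ

/-- `sup { ∫ φ dμ : μ ∈ M_X }`. -/
def intAvg {d : ℕ} (X : Set (FullShift d)) (φ : FullShift d → ℝ) : ℝ :=
  sSup {r | ∃ μ ∈ InvProb X, r = ∫ x, φ x ∂μ}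

/-- `μ` is an equilibrium state of `φ` on `X`. -/
def IsEqState {d : ℕ} (X : Set (FullShift d)) (φ : FullShift d → ℝ)
    (μ : Measure (FullShift d)) : Prop :=
  μ ∈ InvProb X ∧ freeEnergy μ φ = pressure X φ

/-- `p : ℤ → ℤ` parses `x` into consecutive generator blocks from `𝒢`:
the block of `x` from `p j` to `p (j+1) - 1` is a generator, for every `j`. -/
def IsParsing {d : ℕ} (𝒢 : Set (List (Fin d))) (x : FullShift d) (p : ℤ → ℤ) : Prop :=
  StrictMono p ∧ ∀ j : ℤ, ∃ g ∈ 𝒢,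
    p (j + 1) = p j + g.length ∧ ∀ (l : ℕ) (hl : l < g.length), x (p j + l) = g[l]

/-- `X_seq`: the set of bi-infinite concatenations of generators. -/
def Xseq {d : ℕ} (𝒢 : Set (List (Fin d))) : Set (FullShift d) :=
  {x | ∃ p : ℤ → ℤ, IsParsing 𝒢 x p}

/-- The coded shift generated by `𝒢`: the closure of `X_seq`. -/
def codedShift {d : ℕ} (𝒢 : Set (List (Fin d))) : Set (FullShift d) :=
  closure (Xseq 𝒢)

/-- `𝒢` is a unique representation: every `x ∈ X_seq` admits exactly one parsing
into generator blocks (i.e. the set of cut points is uniquely determined). -/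
def UniqueRep {d : ℕ} (𝒢 : Set (List (Fin d))) : Prop :=
  ∀ (x : FullShift d) (p q : ℤ → ℤ),
    IsParsing 𝒢 x p → IsParsing 𝒢 x q → Set.range p = Set.range q

/-- `P_seq(φ) = sup { h_μ + ∫φ dμ : μ ∈ M_X, μ(Xs) = 1 }`. -/
def PseqOf {d : ℕ} (X Xs : Set (FullShift d)) (φ : FullShift d → ℝ) : ℝ :=
  sSup {r | ∃ μ ∈ InvProb X, μ Xs = 1 ∧ r = freeEnergy μ φ}

/-- `P_lim(φ) = sup { h_μ + ∫φ dμ : μ ∈ M_X, μ(X \ Xs) = 1 }`. -/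
def PlimOf {d : ℕ} (X Xs : Set (FullShift d)) (φ : FullShift d → ℝ) : ℝ :=
  sSup {r | ∃ μ ∈ InvProb X, μ (X \ Xs) = 1 ∧ r = freeEnergy μ φ}

/-- `φ` has strict full sequential pressure: `P_seq(φ) > P_lim(φ)`. -/
def StrictFSP {d : ℕ} (X Xs : Set (FullShift d)) (φ : FullShift d → ℝ) : Prop :=
  PlimOf X Xs φ < PseqOf X Xs φ

/-- `φ ∈ FSSP(X)`: `φ` lies in the sup-norm closure (within `C(X,ℝ)`) of the
set of continuous potentials with strict full sequential pressure. -/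
def InFSSP {d : ℕ} (X Xs : Set (FullShift d)) (φ : FullShift d → ℝ) : Prop :=
  ∀ ε : ℝ, 0 < ε → ∃ ψ : FullShift d → ℝ, ContinuousOn ψ X ∧
    (∀ x ∈ X, |φ x - ψ x| ≤ ε) ∧ StrictFSP X Xs ψ

/-- The invariant probability measure equidistributed on the (period-`ℓ`) orbit of `y`. -/
def periodicMeasure {d : ℕ} (y : FullShift d) (ℓ : ℕ) : Measure (FullShift d) :=
  (ℓ : ℝ≥0∞)⁻¹ • ∑ k ∈ Finset.range ℓ, Measure.dirac ((shift d)^[k] y)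

/-- `y` is periodic with period `ℓ ≥ 1`. -/
def IsPeriodicOf {d : ℕ} (y : FullShift d) (ℓ : ℕ) : Prop :=
  1 ≤ ℓ ∧ (shift d)^[ℓ] y = y


/-- Lexicographic order `c ≼ b` on one-sided sequences. -/
def LexLE {D : ℕ} (c b : ℕ → Fin (D + 1)) : Prop :=
  c = b ∨ ∃ n : ℕ, (∀ m : ℕ, m < n → c m = b m) ∧ c n < b n

/-- The two-sided Beta-shift determined by the expansion `b = b(β)`
(indexed from `0`, so `b j` is the digit `b_{j+1}` of the paper):
all `x` every right tail of which is lexicographically `≤ b(β)`. -/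
def betaShift {D : ℕ} (b : ℕ → Fin (D + 1)) : Set (FullShift (D + 1)) :=
  {x | ∀ n : ℤ, LexLE (fun j : ℕ => x (n + (j : ℕ))) b}

/-- The generating set `G_β = {b_1⋯b_j i : j ≥ 1, i < b_{j+1}} ∪ {i : i < b_1}`
(with `0`-based indexing, `b_1⋯b_j i = b 0 ⋯ b (j−1) i` with `i < b j`; the case
`j = 0` gives the single-letter generators `i < b_1`). -/
def betaGens {D : ℕ} (b : ℕ → Fin (D + 1)) : Set (List (Fin (D + 1))) :=
  {g | ∃ j : ℕ, ∃ i : Fin (D + 1), (i : ℕ) < (b j : ℕ) ∧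
        g = (List.ofFn fun t : Fin j => b (t : ℕ)) ++ [i]}

/-- `b` is eventually periodic. -/
def EventuallyPeriodic {D : ℕ} (b : ℕ → Fin (D + 1)) : Prop :=
  ∃ N p : ℕ, 1 ≤ p ∧ ∀ j : ℕ, N ≤ j → b (j + p) = b j

/-- `b` is the beta-expansion of 1 for `β`: it sums to `1` against `β^{-(j+1)}` and is
the lexicographically largest such sequence. -/
def IsBetaExpansion {D : ℕ} (β : ℝ) (b : ℕ → Fin (D + 1)) : Prop :=
  (∑' j : ℕ, ((b j : ℕ) : ℝ) / β ^ (j + 1)) = 1 ∧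
    ∀ c : ℕ → Fin (D + 1), (∑' j : ℕ, ((c j : ℕ) : ℝ) / β ^ (j + 1)) = 1 → LexLE c b

/-- The forward generator `g_{j,i} = b_1 ⋯ b_j i` (0-based: `b 0 ⋯ b (j−1) i`). -/
def fwdGen {D : ℕ} (b : ℕ → Fin (D + 1)) (j : ℕ) (i : Fin (D + 1)) :
    List (Fin (D + 1)) :=
  (List.ofFn fun t : Fin j => b (t : ℕ)) ++ [i]

/-- `G_β` has an infinite chain of (forward) generators, each appearing as a substring
of the interior `b_2 ⋯ b_{j_{k+1}}` of the next. -/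
def HasInfiniteChain {D : ℕ} (b : ℕ → Fin (D + 1)) : Prop :=
  ∃ j : ℕ → ℕ, ∃ i : ℕ → Fin (D + 1),
    (∀ k : ℕ, 1 ≤ j k ∧ ((i k : ℕ) < (b (j k) : ℕ))) ∧
    ∀ k : ℕ, (fwdGen b (j k) (i k)) <:+:
      (List.ofFn fun t : Fin (j (k + 1) - 1) => b (1 + (t : ℕ)))

/-- The first digit at which the tail of `x` at `s` differs from `b` is the `m`-th one, and it is
smaller there: `x` reads a generator of length `m + 1` at `s`. -/
def IsBlock {D : ℕ} (b : ℕ → Fin (D + 1)) (x : FullShift (D + 1)) (s : ℤ) (m : ℕ) : Prop :=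
  (∀ l : ℕ, l < m → x (s + l) = b l) ∧ x (s + m) < b m

/-- Every tail of `b` is lexicographically at most `b`. -/
def SelfAdmissible {D : ℕ} (b : ℕ → Fin (D + 1)) : Prop :=
  ∀ n t : ℕ, (∀ u < t, b (n + u) = b u) → b (n + t) ≤ b t

theorem lexLE_iff {D : ℕ} (c b : ℕ → Fin (D + 1)) :
    LexLE c b ↔ ∀ n, (∀ m < n, c m = b m) → c n ≤ b n := by
  classical
  constructor
  · rintro (rfl | ⟨k, hk, hlt⟩) n hn
    · exact le_rfl
    · rcases lt_trichotomy n k with h | rfl | h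
      · exact (hk n h).le
      · exact hlt.le
      · exact absurd (hn k h) hlt.ne
  · intro h
    by_cases he : ∃ n, c n ≠ b n
    · have hmin : ∀ m < Nat.find he, c m = b m := fun m hm => not_not.1 (Nat.find_min he hm)
      exact Or.inr ⟨Nat.find he, hmin, lt_of_le_of_ne (h _ hmin) (Nat.find_spec he)⟩
    · push Not at he
      exact Or.inl (funext he)

theorem isClosed_betaShift {D : ℕ} (b : ℕ → Fin (D + 1)) : IsClosed (betaShift b) := by
  have h : betaShift b = ⋂ (n : ℤ) (k : ℕ), {x : FullShift (D + 1) |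
      (∀ m < k, x (n + (m : ℕ)) = b m) → x (n + (k : ℕ)) ≤ b k} := by
    ext x
    simp only [betaShift, lexLE_iff, Set.mem_ofPred_eq, Set.mem_iInter]
  rw [h]
  refine isClosed_iInter fun n => isClosed_iInter fun k => ?_
  refine isClosed_imp ?_ (isClosed_le (continuous_apply _) continuous_const)
  simp only [Set.ofPred_forall]
  refine Set.Finite.isOpen_biInter (Set.finite_lt_nat k) fun m _ => ?_
  have hc : Continuous fun x : FullShift (D + 1) => x (n + (m : ℤ)) := continuous_apply _
  exact (isOpen_discrete {b m}).preimage hc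

section Blocks

variable {D : ℕ} {b : ℕ → Fin (D + 1)} {x : FullShift (D + 1)}

theorem IsBlock.unique {s : ℤ} {m n : ℕ} (hm : IsBlock b x s m) (hn : IsBlock b x s n) :
    m = n := by
  rcases lt_trichotomy m n with h | h | h
  · exact absurd (hn.1 m h) hm.2.ne
  · exact h
  · exact absurd (hm.1 n h) hn.2.ne

/-- A tail starting inside a block starts a block that ends no later. -/
theorem IsBlock.exists_suffix (hb : SelfAdmissible b) {s : ℤ} {m l : ℕ}
    (h : IsBlock b x s m) (hl : l ≤ m) : ∃ n, IsBlock b x (s + l) n ∧ l + n ≤ m := by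
  classical
  have hshift : ∀ t : ℕ, l + t < m → x (s + l + t) = b (l + t) := fun t ht => by
    have := h.1 (l + t) ht
    rwa [Nat.cast_add, ← add_assoc] at this
  have hend : x (s + l + (m - l : ℕ)) < b m := by
    have := h.2
    rwa [show s + (m : ℤ) = s + l + (m - l : ℕ) by omega] at this
  have hex : ∃ t, t ≤ m - l ∧ x (s + l + t) ≠ b t := by
    by_contra! hcon
    have hle := hb l (m - l) fun u hu => by
      rw [← hshift u (by omega), hcon u hu.le]
    rw [show l + (m - l) = m by omega, ← hcon _ le_rfl] at hle
    exact absurd hend hle.not_gt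
  obtain ⟨htm, hne⟩ := Nat.find_spec hex
  set t := Nat.find hex with ht
  have hmin : ∀ u < t, x (s + l + u) = b u := fun u hu => by
    have := Nat.find_min hex hu
    by_contra hc
    exact this ⟨by omega, hc⟩
  have hle := hb l t fun u hu => by rw [← hshift u (by omega), hmin u hu]
  refine ⟨t, ⟨hmin, ?_⟩, by omega⟩
  rcases htm.lt_or_eq with hlt | heq
  · refine lt_of_le_of_ne ?_ hne
    rwa [hshift t (by omega)]
  · rw [heq]
    refine hend.trans_le ?_
    rwa [heq, show l + (m - l) = m by omega] at hle

theorem isParsing_betaGens_iff {p : ℤ → ℤ} : IsParsing (betaGens b) x p ↔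
    ∀ j, ∃ m : ℕ, IsBlock b x (p j) m ∧ p (j + 1) = p j + (m + 1) := by
  constructor
  · rintro ⟨-, h⟩ j
    obtain ⟨g, ⟨m, i, hi, rfl⟩, hlen, hx⟩ := h j
    refine ⟨m, ⟨fun l hl => ?_, ?_⟩, by simpa using hlen⟩
    · have := hx l (by simp; omega)
      rw [this, List.getElem_append_left (by simpa using hl)]
      simp
    · have := hx m (by simp)
      rw [this, List.getElem_append_right (by simp)]
      simpa using hi
  · intro h
    refine ⟨strictMono_int_of_lt_succ fun j => ?_, fun j => ?_⟩
    · obtain ⟨m, -, hm⟩ := h j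
      omega
    · obtain ⟨m, hm, hp⟩ := h j
      refine ⟨_, ⟨m, x (p j + m), hm.2, rfl⟩, by simpa using hp, fun l hl => ?_⟩
      have hl' : l < m + 1 := by simpa using hl
      rcases Nat.lt_succ_iff_lt_or_eq.1 hl' with hlt | rfl
      · rw [List.getElem_append_left (by simpa using hlt)]
        simpa using hm.1 l hlt
      · rw [List.getElem_append_right (by simp)]
        simp

theorem exists_le_lt_succ_of_strictMono {p : ℤ → ℤ} (hp : StrictMono p) (c : ℤ) :
    ∃ k, p k ≤ c ∧ c < p (k + 1) := by
  have hgrow : ∀ (n : ℕ) (j : ℤ), p j + n ≤ p (j + n) := by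
    intro n j
    induction n with
    | zero => simp
    | succ n ih =>
      have := hp (show j + n < j + (n + 1 : ℕ) by push_cast; omega)
      push_cast at this ⊢
      omega
  obtain ⟨k, hk, hmax⟩ := Int.exists_greatest_of_bdd (P := fun k => p k ≤ c)
    ⟨|c - p 0|, fun z hz => by
      by_contra! hlt
      have h0 : 0 ≤ z := (abs_nonneg _).trans hlt.le
      have := hgrow z.toNat 0
      rw [zero_add, Int.toNat_of_nonneg h0] at this
      have := le_abs_self (c - p 0)
      omega⟩
    ⟨-|p 0 - c|, by
      have h := hgrow |p 0 - c|.toNat (-|p 0 - c|)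
      rw [Int.toNat_of_nonneg (abs_nonneg _), neg_add_cancel] at h
      have := le_abs_self (p 0 - c)
      omega⟩
  refine ⟨k, hk, ?_⟩
  by_contra! hlt
  have := hmax _ hlt
  omega

theorem exists_cut_eq_of_mem_block (hb : SelfAdmissible b) {p q : ℤ → ℤ}
    (hp : IsParsing (betaGens b) x p) (hq : IsParsing (betaGens b) x q) {k : ℤ} :
    ∀ (n : ℕ) (j : ℤ), q k ≤ p j → p j < q (k + 1) → q (k + 1) - p j ≤ n →
      ∃ i, p i = q (k + 1) := by
  intro n
  induction n with
  | zero =>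
    intro j _ h₁ h₂
    push_cast at h₂
    omega
  | succ n ih =>
    intro j h₀ h₁ h₂
    obtain ⟨m, hm, hpm⟩ := isParsing_betaGens_iff.1 hp j
    obtain ⟨m', hm', hqm⟩ := isParsing_betaGens_iff.1 hq k
    obtain ⟨t, ht, hle⟩ := hm'.exists_suffix hb (l := (p j - q k).toNat) (by omega)
    rw [show q k + ((p j - q k).toNat : ℤ) = p j by omega] at ht
    have := hm.unique ht
    rcases (show p (j + 1) ≤ q (k + 1) by omega).lt_or_eq with hlt | heq
    · exact ih (j + 1) (by omega) hlt (by push_cast at h₂; omega)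
    · exact ⟨j + 1, heq⟩

theorem parsing_eq_of_cut_eq {p q : ℤ → ℤ} (hp : IsParsing (betaGens b) x p)
    (hq : IsParsing (betaGens b) x q) {i k : ℤ} (h : p i = q k) (n : ℕ) :
    p (i + n) = q (k + n) := by
  induction n with
  | zero => simpa using h
  | succ n ih =>
    obtain ⟨m, hm, hpm⟩ := isParsing_betaGens_iff.1 hp (i + n)
    obtain ⟨m', hm', hqm⟩ := isParsing_betaGens_iff.1 hq (k + n)
    rw [← ih] at hm' hqm
    rw [hm.unique hm'] at hpm
    push_cast
    rw [← add_assoc, ← add_assoc, hpm, hqm]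

theorem range_subset_range_of_isParsing (hb : SelfAdmissible b) {p q : ℤ → ℤ}
    (hp : IsParsing (betaGens b) x p) (hq : IsParsing (betaGens b) x q) :
    Set.range p ⊆ Set.range q := by
  rintro _ ⟨j, rfl⟩
  have key : ∀ i k, p i = q k → p i ≤ p j → p j ∈ Set.range q := fun i k h hle => by
    have hij := hp.1.le_iff_le.1 hle
    have := parsing_eq_of_cut_eq hp hq h (j - i).toNat
    rw [show i + ((j - i).toNat : ℤ) = j by omega] at this
    exact ⟨_, this.symm⟩
  obtain ⟨k, hk, -⟩ := exists_le_lt_succ_of_strictMono hq.1 (p j)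
  obtain ⟨i, hi, -⟩ := exists_le_lt_succ_of_strictMono hp.1 (q k)
  obtain ⟨l, hl, hl'⟩ := exists_le_lt_succ_of_strictMono hq.1 (p i)
  rcases (hq.1.le_iff_le.1 (hl.trans hi)).lt_or_eq with hlt | rfl
  · obtain ⟨i', hi'⟩ := exists_cut_eq_of_mem_block hb hp hq _ i hl hl' (Int.self_le_toNat _)
    exact key i' _ hi' (hi'.le.trans ((hq.1.monotone (by omega)).trans hk))
  · exact key i _ (le_antisymm hi hl) (hi.trans hk)

theorem uniqueRep_betaGens (hb : SelfAdmissible b) : UniqueRep (betaGens b) :=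
  fun _ _ _ hp hq => Set.Subset.antisymm (range_subset_range_of_isParsing hb hp hq)
    (range_subset_range_of_isParsing hb hq hp)

theorem Xseq_subset_betaShift (hb : SelfAdmissible b) : Xseq (betaGens b) ⊆ betaShift b := by
  rintro x ⟨p, hp⟩ n
  obtain ⟨k, hk, hk'⟩ := exists_le_lt_succ_of_strictMono hp.1 n
  obtain ⟨m, hm, hpm⟩ := isParsing_betaGens_iff.1 hp k
  obtain ⟨t, ht, -⟩ := hm.exists_suffix hb (l := (n - p k).toNat) (by omega)
  rw [show p k + ((n - p k).toNat : ℤ) = n by omega] at ht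
  exact Or.inr ⟨t, ht.1, ht.2⟩

/-- If every tail is strictly below `b` and the sequence is `0` to the left of `a`, then it is a
concatenation of generators. -/
theorem mem_Xseq_of_forall_isBlock (hb0 : 0 < b 0) {a : ℤ} (hleft : ∀ k < a, x k = 0)
    (hblock : ∀ s, ∃ m, IsBlock b x s m) : x ∈ Xseq (betaGens b) := by
  choose len hlen using hblock
  let next : ℤ → ℤ := fun s => s + (len s + 1)
  refine ⟨fun j => if j ≤ 0 then a + j else next^[j.toNat] a, isParsing_betaGens_iff.2 fun j => ?_⟩
  by_cases hj : j < 0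
  · refine ⟨0, ⟨by simp, ?_⟩, ?_⟩
    · simpa [hj.le, hleft (a + j) (by omega)] using hb0
    · simp [hj.le, show j + 1 ≤ 0 by omega, add_assoc]
  · have hcut : ∀ i : ℤ, 0 ≤ i → (if i ≤ 0 then a + i else next^[i.toNat] a) =
        next^[i.toNat] a := fun i hi => by
      rcases hi.lt_or_eq with h | rfl
      · simp [h.not_ge]
      · simp
    simp only [hcut j (by omega), hcut (j + 1) (by omega)]
    refine ⟨_, hlen _, ?_⟩
    rw [show (j + 1).toNat = j.toNat + 1 by omega, Function.iterate_succ_apply']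

theorem betaShift_subset_codedShift (hb : ∀ N, ∃ n ≥ N, b n ≠ 0) (hb0 : 0 < b 0) :
    betaShift b ⊆ codedShift (betaGens b) := by
  classical
  intro x hx
  let y : ℕ → FullShift (D + 1) := fun N k => if -(N : ℤ) ≤ k ∧ k ≤ N then x k else 0
  have hlim : Tendsto y atTop (𝓝 x) := by
    refine tendsto_pi_nhds.2 fun k => tendsto_const_nhds.congr' ?_
    filter_upwards [eventually_ge_atTop k.natAbs] with N hN
    simp only [y]
    rw [if_pos (by omega)]
  refine mem_closure_of_tendsto hlim (Eventually.of_forall fun N => ?_)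
  refine mem_Xseq_of_forall_isBlock hb0 (a := -(N : ℤ)) (fun k hk => if_neg (by omega)) fun s => ?_
  by_cases hs : s < -(N : ℤ)
  · refine ⟨0, by simp, ?_⟩
    have : y N (s + (0 : ℕ)) = 0 := if_neg (by push_cast; omega)
    rwa [this]
  · have hle : LexLE (fun j : ℕ => y N (s + (j : ℕ))) b := by
      refine (lexLE_iff _ _).2 fun n hn => ?_
      by_cases hw : s + n ≤ N
      · have hyx : ∀ m ≤ n, y N (s + (m : ℕ)) = x (s + (m : ℕ)) := fun m hm => if_pos (by omega)
        have := (lexLE_iff _ _).1 (hx s) n fun m hm => by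
          rw [← hyx m hm.le]
          exact hn m hm
        simpa only [hyx n le_rfl] using this
      · have : y N (s + (n : ℕ)) = 0 := if_neg (by omega)
        simp only [this, Fin.zero_le]
    rcases hle with heq | ⟨n, hn, hlt⟩
    · obtain ⟨n, hn, hne⟩ := hb (N - s + 1).toNat
      refine absurd ?_ hne
      rw [← heq]
      exact if_neg (by omega)
    · exact ⟨n, hn, hlt⟩

end Blocks

section Expansion

/-- The orbit of `1` under the `β`-transformation. -/
def betaOrbit (β : ℝ) : ℕ → ℝ
  | 0 => 1
  | n + 1 => Int.fract (β * betaOrbit β n)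

theorem betaOrbit_nonneg (β : ℝ) : ∀ n, 0 ≤ betaOrbit β n
  | 0 => zero_le_one
  | _ + 1 => Int.fract_nonneg _

theorem betaOrbit_succ_lt_one (β : ℝ) (n : ℕ) : betaOrbit β (n + 1) < 1 := Int.fract_lt_one _

theorem betaOrbit_le_one (β : ℝ) : ∀ n, betaOrbit β n ≤ 1
  | 0 => le_rfl
  | n + 1 => (betaOrbit_succ_lt_one β n).le

variable {D : ℕ} {β : ℝ} {b : ℕ → Fin (D + 1)}

theorem summable_digits (hβ : 1 < β) (c : ℕ → Fin (D + 1)) :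
    Summable fun j : ℕ => ((c j : ℕ) : ℝ) / β ^ (j + 1) := by
  have hg : Summable fun j : ℕ => (D : ℝ) * β⁻¹ ^ (j + 1) :=
    ((summable_nat_add_iff 1).2
      (summable_geometric_of_lt_one (by positivity) (inv_lt_one_of_one_lt₀ hβ))).mul_left _
  refine Summable.of_nonneg_of_le (fun j => by positivity) (fun j => ?_) hg
  rw [inv_pow, ← div_eq_mul_inv]
  gcongr
  exact_mod_cast Nat.lt_succ_iff.1 (c j).2

theorem sum_range_digits_le_one (hβ : 1 < β) (hsum : ∑' j : ℕ, ((b j : ℕ) : ℝ) / β ^ (j + 1) = 1)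
    (n : ℕ) : ∑ j ∈ Finset.range n, ((b j : ℕ) : ℝ) / β ^ (j + 1) ≤ 1 := by
  rw [← hsum]
  exact (summable_digits hβ b).sum_le_tsum _ fun j _ => by positivity

theorem sum_digits_add_remainder (hβ : 1 < β) {c : ℕ → ℝ} {r : ℕ → ℝ} {n : ℕ}
    (hr : ∀ j < n, β * r j = c j + r (j + 1)) :
    ∑ j ∈ Finset.range n, c j / β ^ (j + 1) + r n / β ^ n = r 0 := by
  have hpos : 0 < β := by linarith
  induction n with
  | zero => simp
  | succ n ih =>
    rw [← ih fun j hj => hr j (by omega), Finset.sum_range_succ, add_assoc, ← add_div,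
      ← hr n (by omega), pow_succ']
    congr 1
    field_simp

/-- The lexicographically largest expansion of `1` is the greedy one. -/
theorem IsBetaExpansion.mul_betaOrbit (hβ : 1 < β) (hβu : β < (D : ℝ) + 1)
    (hb : IsBetaExpansion β b) (n : ℕ) :
    β * betaOrbit β n = (b n : ℕ) + betaOrbit β (n + 1) := by
  have hpos : 0 < β := by linarith
  have hnn : ∀ n, 0 ≤ β * betaOrbit β n := fun n => mul_nonneg hpos.le (betaOrbit_nonneg β n)
  let g : ℕ → Fin (D + 1) := fun n => ⟨⌊β * betaOrbit β n⌋₊, by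
    rw [Nat.floor_lt (hnn n)]
    push_cast
    nlinarith [betaOrbit_le_one β n]⟩
  have hg : ∀ n, β * betaOrbit β n = (g n : ℕ) + betaOrbit β (n + 1) := fun n => by
    have := Int.floor_add_fract (β * betaOrbit β n)
    rw [← natCast_floor_eq_intCast_floor (hnn n)] at this
    exact this.symm
  have hgsum : ∑' j : ℕ, ((g j : ℕ) : ℝ) / β ^ (j + 1) = 1 := by
    refine HasSum.tsum_eq ?_
    rw [hasSum_iff_tendsto_nat_of_nonneg fun j => by positivity]
    have hz : Tendsto (fun n => betaOrbit β n / β ^ n) atTop (𝓝 0) := by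
      refine squeeze_zero (fun n => div_nonneg (betaOrbit_nonneg β n) (by positivity))
        (fun n => ?_) (tendsto_pow_atTop_nhds_zero_of_lt_one (r := β⁻¹) (by positivity)
          (inv_lt_one_of_one_lt₀ hβ))
      rw [inv_pow, ← one_div]
      gcongr
      exact betaOrbit_le_one β n
    have := (tendsto_const_nhds (x := (1 : ℝ))).sub hz
    rw [sub_zero] at this
    refine this.congr fun n => ?_
    have := sum_digits_add_remainder hβ (n := n) fun j _ => hg j
    change _ = (1 : ℝ) at this
    linarith
  rcases hb.2 g hgsum with heq | ⟨n, heq, hlt⟩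
  · rw [← heq]
    exact hg _
  · exfalso
    have h₁ := sum_range_digits_le_one hβ hb.1 (n + 1)
    have h₂ := sum_digits_add_remainder hβ (n := n + 1) fun j _ => hg j
    change _ = (1 : ℝ) at h₂
    rw [Finset.sum_range_succ] at h₁ h₂
    rw [Finset.sum_congr rfl fun j hj => by rw [heq j (Finset.mem_range.1 hj)]] at h₂
    have hlt' : ((g n : ℕ) : ℝ) + 1 ≤ (b n : ℕ) := by exact_mod_cast hlt
    have h₃ : ((g n : ℕ) : ℝ) / β ^ (n + 1) + betaOrbit β (n + 1) / β ^ (n + 1) <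
        ((b n : ℕ) : ℝ) / β ^ (n + 1) := by
      rw [← add_div]
      gcongr
      linarith [betaOrbit_succ_lt_one β n]
    linarith

theorem IsBetaExpansion.selfAdmissible (hβ : 1 < β) (hβu : β < (D : ℝ) + 1)
    (hb : IsBetaExpansion β b) : SelfAdmissible b := by
  have hrec := hb.mul_betaOrbit hβ hβu
  have hpos : 0 < β := by linarith
  intro n t heq
  have hle : ∀ u ≤ t, betaOrbit β (n + u) ≤ betaOrbit β u := by
    intro u
    induction u with
    | zero => exact fun _ => betaOrbit_le_one β n
    | succ u ih =>
      intro hu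
      have h₁ := hrec (n + u)
      have h₂ := hrec u
      rw [heq u hu] at h₁
      have := mul_le_mul_of_nonneg_left (ih (by omega)) hpos.le
      rw [← add_assoc]
      linarith
  have h₁ := hrec (n + t)
  have h₂ := hrec t
  have h₃ := mul_le_mul_of_nonneg_left (hle t le_rfl) hpos.le
  have h₄ := betaOrbit_nonneg β (n + t + 1)
  have h₅ := betaOrbit_succ_lt_one β t
  have : ((b (n + t) : ℕ) : ℝ) < (b t : ℕ) + 1 := by linarith
  exact Nat.lt_succ_iff.1 (by exact_mod_cast this)

end Expansion

/-- for non-integral `β > 1` (here `D = ⌊β⌋ ≥ 1`, `D < β < D+1`) whose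
expansion `b(β)` is not eventually periodic, the two-sided Beta-shift is the coded
shift generated by `G_β`, and `G_β` is a unique representation. -/
theorem statement13 {D : ℕ} (hD : 1 ≤ D) (β : ℝ) (hβl : (D : ℝ) < β)
    (hβu : β < (D : ℝ) + 1) (b : ℕ → Fin (D + 1)) (hb : IsBetaExpansion β b)
    (hnp : ¬ EventuallyPeriodic b) :
    betaShift b = codedShift (betaGens b) ∧ UniqueRep (betaGens b) := by
  have hβ : 1 < β := by
    have : (1 : ℝ) ≤ D := by exact_mod_cast hD
    linarith
  have hadm := hb.selfAdmissible hβ hβu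
  have hne : ∀ N, ∃ n ≥ N, b n ≠ 0 := by
    by_contra! h
    obtain ⟨N, hN⟩ := h
    exact hnp ⟨N, 1, le_rfl, fun j hj => by rw [hN j hj, hN (j + 1) (by omega)]⟩
  have hb0 : 0 < b 0 := by
    obtain ⟨n, -, hn⟩ := hne 0
    exact (Fin.pos_iff_ne_zero.2 hn).trans_le (by simpa using hadm n 0 (by simp))
  exact ⟨Set.Subset.antisymm (betaShift_subset_codedShift hne hb0)
    (closure_minimal (Xseq_subset_betaShift hadm) (isClosed_betaShift b)),
    uniqueRep_betaGens hadm⟩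

end PaperStmt
end
end

section
/- Let β > 1 be a non-integral real number whose beta-expansion b(β) is not eventually periodic, and suppose the generating set G_β of the two-sided Beta-shift X̂_β contains no infinite chains of generators. Then every f-invariant Borel probability measure μ on X̂_β satisfies μ(X̂_β \ X̂_{β,seq}) = 0, where X̂_{β,seq} is the set of bi-infinite concatenations of words of G_β. -/
open Filter MeasureTheory Topology
open scoped BigOperators ENNReal

noncomputable section

namespace PaperStmt

/-! ### Greedy expansions -/

/-- Remainders of the greedy expansion of `1` in base `β`. -/
def greedyRem (β : ℝ) : ℕ → ℝ
  | 0 => 1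
  | n + 1 => β * greedyRem β n - (⌊β * greedyRem β n⌋₊ : ℝ)

lemma greedyRem_mem {β : ℝ} (hβ : 0 ≤ β) (n : ℕ) : greedyRem β n ∈ Set.Icc (0 : ℝ) 1 := by
  induction n with
  | zero => simp [greedyRem]
  | succ n ih =>
    have h0 : 0 ≤ β * greedyRem β n := mul_nonneg hβ ih.1
    have h1 := Nat.floor_le h0
    have h2 := Nat.lt_floor_add_one (β * greedyRem β n)
    simp only [greedyRem, Set.mem_Icc]
    constructor <;> linarith

lemma floor_greedyRem_lt {D : ℕ} {β : ℝ} (hβ : 0 ≤ β) (hβu : β < (D : ℝ) + 1) (n : ℕ) :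
    ⌊β * greedyRem β n⌋₊ < D + 1 := by
  have h := greedyRem_mem hβ n
  rw [Nat.floor_lt (mul_nonneg hβ h.1)]
  push_cast
  nlinarith [h.1, h.2]

lemma sum_greedy {β : ℝ} (hβ : 0 < β) (n : ℕ) :
    ∑ j ∈ Finset.range n, (⌊β * greedyRem β j⌋₊ : ℝ) / β ^ (j + 1) =
      1 - greedyRem β n / β ^ n := by
  induction n with
  | zero => simp [greedyRem]
  | succ n ih =>
    rw [Finset.sum_range_succ, ih]
    simp only [greedyRem]
    field_simp
    ring

lemma hasSum_greedy {β : ℝ} (hβ : 1 < β) :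
    HasSum (fun j : ℕ => (⌊β * greedyRem β j⌋₊ : ℝ) / β ^ (j + 1)) 1 := by
  have hβ0 : 0 < β := by linarith
  rw [hasSum_iff_tendsto_nat_of_nonneg (fun j => by positivity)]
  simp only [sum_greedy hβ0]
  have hlim : Tendsto (fun n : ℕ => greedyRem β n / β ^ n) atTop (𝓝 0) := by
    refine squeeze_zero (fun n => div_nonneg (greedyRem_mem hβ0.le n).1 (by positivity))
      (g := fun n : ℕ => (β⁻¹) ^ n) (fun n => ?_)
      (tendsto_pow_atTop_nhds_zero_of_lt_one (by positivity) (inv_lt_one_of_one_lt₀ hβ))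
    rw [inv_pow, ← one_div]
    have := (greedyRem_mem hβ0.le n).2
    gcongr
  simpa using hlim.const_sub 1

/-- The digits of the lexicographically largest expansion of `1` are the greedy ones. -/
lemma IsBetaExpansion.eq_greedy {D : ℕ} {β : ℝ} (hβ : 1 < β) (hβu : β < (D : ℝ) + 1)
    {b : ℕ → Fin (D + 1)} (hb : IsBetaExpansion β b) (n : ℕ) :
    (b n : ℕ) = ⌊β * greedyRem β n⌋₊ := by
  have hβ0 : 0 < β := by linarith
  set c : ℕ → Fin (D + 1) := fun j => ⟨⌊β * greedyRem β j⌋₊, floor_greedyRem_lt hβ0.le hβu j⟩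
  rcases hb.2 c (hasSum_greedy hβ).tsum_eq with h | ⟨k, hk, hlt⟩
  · rw [← h]
  exfalso
  have hsum : Summable (fun j : ℕ => ((b j : ℕ) : ℝ) / β ^ (j + 1)) := by
    by_contra h
    have := hb.1
    rw [tsum_eq_zero_of_not_summable h] at this
    exact zero_ne_one this
  have hle := hsum.sum_le_tsum (Finset.range (k + 1)) (fun j _ => by positivity)
  rw [hb.1, Finset.sum_range_succ] at hle
  have hpre : ∑ j ∈ Finset.range k, ((b j : ℕ) : ℝ) / β ^ (j + 1) =
      1 - greedyRem β k / β ^ k := by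
    rw [← sum_greedy hβ0]
    refine Finset.sum_congr rfl fun j hj => ?_
    rw [← hk j (Finset.mem_range.1 hj)]
  have hdigit : ((b k : ℕ) : ℝ) / β ^ (k + 1) ≤ β * greedyRem β k / β ^ (k + 1) := by
    have : β * greedyRem β k / β ^ (k + 1) = greedyRem β k / β ^ k := by
      field_simp
      ring
    rw [this]
    linarith
  have hdigit' : ((b k : ℕ) : ℝ) ≤ β * greedyRem β k :=
    (div_le_div_iff_of_pos_right (by positivity)).1 hdigit
  exact absurd (Nat.le_floor hdigit') (not_le.2 hlt)

/-- No tail of a beta-expansion exceeds the expansion itself lexicographically. -/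
lemma IsBetaExpansion.tail_le {D : ℕ} {β : ℝ} (hβ : 1 < β) (hβu : β < (D : ℝ) + 1)
    {b : ℕ → Fin (D + 1)} (hb : IsBetaExpansion β b) (d e : ℕ)
    (h : ∀ t < e, b (d + t) = b t) : b (d + e) ≤ b e := by
  have hβ0 : 0 < β := by linarith
  have hrem : ∀ t ≤ e, greedyRem β (d + t) ≤ greedyRem β t := by
    intro t
    induction t with
    | zero => exact fun _ => (greedyRem_mem hβ0.le _).2
    | succ t ih =>
      intro ht
      have h1 := ih (by omega)
      have h2 : ⌊β * greedyRem β (d + t)⌋₊ = ⌊β * greedyRem β t⌋₊ := by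
        rw [← hb.eq_greedy hβ hβu, ← hb.eq_greedy hβ hβu, h t (by omega)]
      rw [← add_assoc]
      simp only [greedyRem, h2]
      gcongr
  rw [Fin.le_def, hb.eq_greedy hβ hβu, hb.eq_greedy hβ hβu]
  have := hrem e le_rfl
  gcongr

/-! ### Cut points -/

/-- `q` is a cut point of `x`: no prefix of `b` occurs in `x` from a position before `q`
up to `q`. -/
def IsCut {D : ℕ} (b : ℕ → Fin (D + 1)) (x : FullShift (D + 1)) (q : ℤ) : Prop :=
  ∀ n < q, ¬ ∀ t : ℕ, n + t < q → x (n + t) = b t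

/-- `k n` is the first index at which the tail of `x` at `n` falls below `b`. -/
def IsFirstDrop {D : ℕ} (b : ℕ → Fin (D + 1)) (x : FullShift (D + 1)) (k : ℤ → ℕ) : Prop :=
  ∀ n : ℤ, (∀ t : ℕ, t < k n → x (n + t) = b t) ∧ x (n + k n) < b (k n)

section Drop

variable {D : ℕ} {b : ℕ → Fin (D + 1)} {x : FullShift (D + 1)} {k : ℤ → ℕ}

lemma IsFirstDrop.isCut_iff (hk : IsFirstDrop b x k) {q : ℤ} :
    IsCut b x q ↔ ∀ n < q, n + k n < q := by
  refine forall₂_congr fun n _ => ⟨fun h => ?_, fun h h' => ?_⟩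
  · by_contra! hq
    exact h fun t ht => (hk n).1 t (by omega)
  · exact (hk n).2.ne (h' _ h)

lemma IsFirstDrop.laminar (hk : IsFirstDrop b x k)
    (htail : ∀ d e : ℕ, (∀ t < e, b (d + t) = b t) → b (d + e) ≤ b e)
    {n m : ℤ} (hnm : n ≤ m) (hm : m ≤ n + k n) : m + k m ≤ n + k n := by
  by_contra! hlt
  obtain ⟨d, rfl⟩ := Int.exists_add_of_le hnm
  obtain ⟨e, he⟩ : ∃ e, k n = d + e := Nat.exists_eq_add_of_le (by omega)
  have h1 := htail d e fun t ht => by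
    rw [← (hk n).1 (d + t) (by omega), ← (hk (n + d)).1 t (by omega)]
    push_cast
    rw [add_assoc]
  have h2 := (hk n).2
  have h3 := (hk (n + d)).1 e (by omega)
  rw [he] at h2
  push_cast at h2
  rw [← add_assoc, h3] at h2
  exact absurd h1 (not_le.2 h2)

lemma IsFirstDrop.isCut_next (hk : IsFirstDrop b x k)
    (htail : ∀ d e : ℕ, (∀ t < e, b (d + t) = b t) → b (d + e) ≤ b e)
    {q : ℤ} (hq : IsCut b x q) : IsCut b x (q + k q + 1) := by
  rw [hk.isCut_iff] at hq ⊢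
  intro n hn
  rcases lt_or_ge n q with h | h
  · have := hq n h
    omega
  · have := hk.laminar htail h (by omega)
    omega

lemma IsFirstDrop.exists_isCut_prev (hk : IsFirstDrop b x k)
    (htail : ∀ d e : ℕ, (∀ t < e, b (d + t) = b t) → b (d + e) ≤ b e)
    (hunb : ∀ q, ∃ r < q, IsCut b x r) {q : ℤ} (hq : IsCut b x q) :
    ∃ r, IsCut b x r ∧ r + k r + 1 = q := by
  obtain ⟨r, ⟨hr, hrq⟩, hmax⟩ := Int.exists_greatest_of_bdd (P := fun r => IsCut b x r ∧ r < q)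
    ⟨q, fun z hz => hz.2.le⟩ (by obtain ⟨r, h, h'⟩ := hunb q; exact ⟨r, h', h⟩)
  refine ⟨r, hr, ?_⟩
  have h1 := hk.isCut_iff.1 hq r hrq
  by_contra hne
  have := hmax _ ⟨hk.isCut_next htail hr, by omega⟩
  omega

lemma IsFirstDrop.mem_Xseq (hk : IsFirstDrop b x k)
    (htail : ∀ d e : ℕ, (∀ t < e, b (d + t) = b t) → b (d + e) ≤ b e)
    (hunb : ∀ q, ∃ r < q, IsCut b x r) : x ∈ Xseq (betaGens b) := by
  let next : {q // IsCut b x q} → {q // IsCut b x q} :=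
    fun q => ⟨q + k q + 1, hk.isCut_next htail q.2⟩
  have hmono : StrictMono next := by
    intro r q hrq
    have := hk.isCut_iff.1 q.2 r hrq
    change (r : ℤ) + k r + 1 < q + k q + 1
    omega
  have hsurj : Function.Surjective next := by
    rintro ⟨q, hq⟩
    obtain ⟨r, hr, h⟩ := hk.exists_isCut_prev htail hunb hq
    exact ⟨⟨r, hr⟩, Subtype.ext h⟩
  let e : Equiv.Perm {q // IsCut b x q} := Equiv.ofBijective next ⟨hmono.injective, hsurj⟩
  obtain ⟨q₀, -, hq₀⟩ := hunb 0
  let p : ℤ → ℤ := fun j => ((e ^ j) ⟨q₀, hq₀⟩ : {q // IsCut b x q})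
  have hp : ∀ j, p (j + 1) = p j + k (p j) + 1 := by
    intro j
    simp only [p]
    rw [add_comm, zpow_add, zpow_one]
    rfl
  refine ⟨p, strictMono_int_of_lt_succ fun j => by rw [hp]; omega, fun j =>
    ⟨(List.ofFn fun t : Fin (k (p j)) => b (t : ℕ)) ++ [x (p j + k (p j))],
      ⟨k (p j), x (p j + k (p j)), (hk (p j)).2, rfl⟩, ?_, fun l hl => ?_⟩⟩
  · rw [hp]
    simp [add_assoc]
  · simp only [List.length_append, List.length_ofFn, List.length_singleton] at hl
    rcases Nat.lt_succ_iff_lt_or_eq.1 hl with h | rfl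
    · rw [List.getElem_append_left (by simpa using h), (hk (p j)).1 l h]
      simp
    · simp

lemma IsFirstDrop.fwdGen_infix (hk : IsFirstDrop b x k) {n m : ℤ} (hmn : m < n)
    (h : n + k n < m + k m) :
    fwdGen b (k n) (x (n + k n)) <:+: List.ofFn fun t : Fin (k m - 1) => b (1 + (t : ℕ)) := by
  obtain ⟨d, rfl⟩ := Int.exists_add_of_le (Int.add_one_le_of_lt hmn)
  set L := List.ofFn fun t : Fin (k m - 1) => b (1 + (t : ℕ)) with hL
  set n : ℤ := m + 1 + d with hn
  have heq : fwdGen b (k n) (x (n + k n)) = (L.drop d).take (k n + 1) := by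
    refine List.ext_getElem ?_ fun t h1 h2 => ?_
    · simp only [fwdGen, hL, List.length_append, List.length_ofFn, List.length_singleton,
        List.length_take, List.length_drop]
      omega
    · simp only [fwdGen, List.length_append, List.length_ofFn, List.length_singleton] at h1
      have hx : (fwdGen b (k n) (x (n + k n)))[t]'(by simpa [fwdGen] using h1) = x (n + t) := by
        rcases Nat.lt_succ_iff_lt_or_eq.1 h1 with h | rfl
        · simp only [fwdGen]
          rw [List.getElem_append_left (by simpa using h), (hk n).1 t h]
          simp
        · simp [fwdGen]
      rw [hx]
      simp only [hL, List.getElem_take, List.getElem_drop, List.getElem_ofFn]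
      rw [← (hk m).1 (1 + (d + t)) (by omega)]
      congr 1
      push_cast
      omega
  rw [heq]
  exact (List.take_prefix _ _).isInfix.trans (List.drop_suffix _ _).isInfix

lemma IsFirstDrop.hasInfiniteChain (hk : IsFirstDrop b x k)
    (htail : ∀ d e : ℕ, (∀ t < e, b (d + t) = b t) → b (d + e) ≤ b e)
    (hcut : ∀ q, ¬ IsCut b x q) : HasInfiniteChain b := by
  simp only [hk.isCut_iff] at hcut
  push Not at hcut
  choose c hc hc' using hcut
  let n : ℕ → ℤ := fun i => (fun q => c (q + k q + 1))^[i] (c 0)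
  have hn : ∀ i, n (i + 1) = c (n i + k (n i) + 1) := fun i => Function.iterate_succ_apply' _ _ _
  refine ⟨fun i => k (n i), fun i => x (n i + k (n i)), fun i => ⟨?_, (hk (n i)).2⟩, fun i => ?_⟩
  · cases i with
    | zero =>
      have h1 := hc 0
      have h2 := hc' 0
      change 1 ≤ k (c 0)
      omega
    | succ i =>
      have h1 := hc (n i + k (n i) + 1)
      have h2 := hc' (n i + k (n i) + 1)
      rw [← hn] at h1 h2
      change 1 ≤ k (n (i + 1))
      omega
  · have h1 := hc (n i + k (n i) + 1)
    have h2 := hc' (n i + k (n i) + 1)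
    rw [← hn] at h1 h2
    refine hk.fwdGen_infix ?_ (by omega)
    by_contra! h
    have := hk.laminar htail h (by omega)
    omega

end Drop

/-! ### Null sets -/

/-- A disjoint sequence of sets permuted by the shift is null for any invariant finite measure. -/
lemma measure_iUnion_eq_zero_of_shift {d : ℕ} {μ : Measure (FullShift d)} [IsFiniteMeasure μ]
    (hμ : μ.map (shift d) = μ) {A : ℤ → Set (FullShift d)} (hA : ∀ n, MeasurableSet (A n))
    (hdisj : Pairwise (Function.onFun Disjoint A))
    (hshift : ∀ n, shift d ⁻¹' A n = A (n + 1)) : μ (⋃ n, A n) = 0 := by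
  have hmeas : Measurable (shift d) := measurable_pi_lambda _ fun k => measurable_pi_apply _
  have hstep : ∀ n, μ (A (n + 1)) = μ (A n) := fun n => by
    rw [← hshift, ← Measure.map_apply hmeas (hA n), hμ]
  have hconst : ∀ n, μ (A n) = μ (A 0) := fun n => by
    induction n with
    | zero => rfl
    | succ i ih => rw [hstep, ih]
    | pred i ih => rw [← ih, ← hstep, sub_add_cancel]
  have hunion := measure_iUnion hdisj hA (μ := μ)
  simp only [hconst] at hunion
  have h0 : μ (A 0) = 0 := by
    by_contra h
    exact measure_ne_top μ _ (hunion.trans (ENNReal.tsum_const_eq_top_of_ne_zero h))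
  simpa [h0] using hunion

lemma measurableSet_coord_eq {d : ℕ} (n : ℤ) (a : Fin d) :
    MeasurableSet {x : FullShift d | x n = a} :=
  measurableSet_eq_fun (measurable_pi_apply n) measurable_const

lemma measurableSet_isCut {D : ℕ} (b : ℕ → Fin (D + 1)) (q : ℤ) :
    MeasurableSet {x | IsCut b x q} := by
  simp only [IsCut, Set.ofPred_forall]
  refine MeasurableSet.iInter fun n => MeasurableSet.iInter fun _ => ?_
  refine MeasurableSet.compl
    (s := {x : FullShift (D + 1) | ∀ t : ℕ, n + t < q → x (n + t) = b t}) ?_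
  simp only [Set.ofPred_forall]
  exact MeasurableSet.iInter fun t => MeasurableSet.iInter fun _ => measurableSet_coord_eq _ _

lemma isCut_shift {D : ℕ} (b : ℕ → Fin (D + 1)) (x : FullShift (D + 1)) (q : ℤ) :
    IsCut b (shift (D + 1) x) q ↔ IsCut b x (q + 1) := by
  simp only [IsCut, shift]
  constructor
  · intro h n hn h'
    refine h (n - 1) (by omega) fun t ht => ?_
    rw [← h' t (by omega)]
    congr 1
    ring
  · intro h n hn h'
    refine h (n + 1) (by omega) fun t ht => ?_
    rw [← h' t (by omega)]
    congr 1
    ring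

/-- Almost no point has a tail equal to a sequence that is not eventually periodic. -/
lemma measure_tail_eq_zero {D : ℕ} {b : ℕ → Fin (D + 1)} (hnp : ¬ EventuallyPeriodic b)
    {μ : Measure (FullShift (D + 1))} [IsFiniteMeasure μ] (hμ : μ.map (shift (D + 1)) = μ) :
    μ (⋃ n : ℤ, {x | ∀ t : ℕ, x (n + t) = b t}) = 0 := by
  refine measure_iUnion_eq_zero_of_shift hμ (fun n => ?_) ?_ fun n => ?_
  · simp only [Set.ofPred_forall]
    exact MeasurableSet.iInter fun t => measurableSet_coord_eq _ _
  · refine (pairwise_disjoint_on _).2 fun n m hnm => Set.disjoint_left.2 fun x hx hx' => hnp ?_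
    obtain ⟨d, rfl⟩ := Int.exists_add_of_le hnm.le
    refine ⟨0, d, by omega, fun j _ => ?_⟩
    rw [← hx (j + d), ← hx' j]
    congr 1
    push_cast
    ring
  · ext x
    simp only [Set.mem_preimage, Set.mem_ofPred_eq, shift]
    refine forall_congr' fun t => ?_
    rw [add_right_comm]

/-- Almost no point has a first cut point. -/
lemma measure_first_isCut {D : ℕ} (b : ℕ → Fin (D + 1))
    {μ : Measure (FullShift (D + 1))} [IsFiniteMeasure μ] (hμ : μ.map (shift (D + 1)) = μ) :
    μ (⋃ n : ℤ, {x | IsCut b x n ∧ ∀ m < n, ¬ IsCut b x m}) = 0 := by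
  refine measure_iUnion_eq_zero_of_shift hμ (fun n => ?_) ?_ fun n => ?_
  · refine (measurableSet_isCut b n).inter ?_
    change MeasurableSet {x | ∀ m < n, ¬ IsCut b x m}
    simp only [Set.ofPred_forall]
    exact MeasurableSet.iInter fun m => MeasurableSet.iInter fun _ =>
      (measurableSet_isCut b m).compl
  · exact (pairwise_disjoint_on _).2 fun n m hnm => Set.disjoint_left.2 fun x hx hx' =>
      hx'.2 n hnm hx.1
  · ext x
    simp only [Set.mem_preimage, Set.mem_ofPred_eq, isCut_shift]
    refine and_congr_right fun _ => ⟨fun h m hm => ?_, fun h m hm => h _ (by omega)⟩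
    simpa using h (m - 1) (by omega)

/-- if moreover `G_β` contains no infinite chain of generators, then
every shift-invariant Borel probability measure on `X̂_β` gives zero measure to
`X̂_β \ X̂_{β,seq}`. -/
theorem statement14 {D : ℕ} (hD : 1 ≤ D) (β : ℝ) (hβl : (D : ℝ) < β)
    (hβu : β < (D : ℝ) + 1) (b : ℕ → Fin (D + 1)) (hb : IsBetaExpansion β b)
    (hnp : ¬ EventuallyPeriodic b) (hchain : ¬ HasInfiniteChain b) :
    ∀ μ : Measure (FullShift (D + 1)), μ ∈ InvProb (betaShift b) →
      μ (betaShift b \ Xseq (betaGens b)) = 0 := by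
  rintro μ ⟨hprob, hinv, -⟩
  have hβ : 1 < β := lt_of_le_of_lt (by exact_mod_cast hD) hβl
  have htail := hb.tail_le hβ hβu
  refine measure_mono_null ?_
    (measure_union_null (measure_tail_eq_zero hnp hinv) (measure_first_isCut b hinv))
  rintro x ⟨hx, hseq⟩
  by_contra hnot
  simp only [Set.mem_union, Set.mem_iUnion, Set.mem_ofPred_eq, not_or, not_exists] at hnot
  obtain ⟨hno_tail, hno_first⟩ := hnot
  have hdrop : ∀ n : ℤ, ∃ k : ℕ, (∀ t : ℕ, t < k → x (n + t) = b t) ∧ x (n + k) < b k :=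
    fun n => (hx n).resolve_left fun h => hno_tail n fun t => congrFun h t
  choose k hk using hdrop
  have hk : IsFirstDrop b x k := hk
  refine hseq (hk.mem_Xseq htail ?_)
  by_contra! hbdd
  obtain ⟨q, hq⟩ := hbdd
  by_cases hcut : ∃ r, IsCut b x r
  · obtain ⟨r, hr, hmin⟩ := Int.exists_least_of_bdd (P := fun r => IsCut b x r)
      ⟨q, fun z hz => not_lt.1 fun h => hq z h hz⟩ hcut
    exact hno_first r ⟨hr, fun m hm h => absurd (hmin m h) (not_le.2 hm)⟩
  · exact hchain (hk.hasInfiniteChain htail (not_exists.1 hcut))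

end PaperStmt
end
end

section
/- Let X be the coded shift over the alphabet {0,1} generated by G = {(000)^k 1^k : k ∈ ℕ}, and let φ : X → ℝ be given by φ(x) = 1 if x_0 = 1 and φ(x) = 0 if x_0 = 0. Then P_top(X,φ) = 1 (attained by the Dirac measure at the fixed point 1^∞), while P_seq(φ) ≤ 1/4 + log 2 < 1 and P_top(X_m, φ|_{X_m}) ≤ 1/4 + log 2 for every m ∈ ℕ. In particular φ ∉ FSP(X), i.e. P_seq(φ) < P_top(X,φ). -/
open Filter MeasureTheory Topology
open scoped BigOperators ENNReal

noncomputable section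

namespace PaperStmt

/-- The generators `(000)^k 1^k`, `k ≥ 1` (here indexed by `k ∈ ℕ` via `k+1`). -/
def exG : ℕ → List (Fin 2) := fun k =>
  List.replicate (3 * (k + 1)) (0 : Fin 2) ++ List.replicate (k + 1) (1 : Fin 2)

/-- The potential `φ(x) = 1` if `x_0 = 1` and `φ(x) = 0` if `x_0 = 0`. -/
def exφ : FullShift 2 → ℝ := fun x => if x 0 = 1 then 1 else 0

theorem shift_iterate_apply {d : ℕ} (k : ℕ) (x : FullShift d) (j : ℤ) :
    (shift d)^[k] x j = x (j + k) := by
  induction k generalizing x with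
  | zero => simp
  | succ k ih =>
    rw [Function.iterate_succ_apply, ih]
    simp only [shift]
    push_cast
    congr 1
    ring

/-- The number of `1`s of `x` in the window `[a, a + n)`. -/
def ones (x : FullShift 2) (a : ℤ) (n : ℕ) : ℕ :=
  ∑ i ∈ Finset.range n, if x (a + i) = 1 then 1 else 0

theorem birkhoff_exφ (n : ℕ) (x : FullShift 2) : birkhoff exφ n x = ones x 0 n := by
  simp [birkhoff, ones, exφ, shift_iterate_apply]

theorem ones_add (x : FullShift 2) (a : ℤ) (n m : ℕ) :
    ones x a (n + m) = ones x a n + ones x (a + n) m := by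
  simp only [ones, Finset.sum_range_add, Nat.cast_add, add_assoc]

theorem ones_le (x : FullShift 2) (a : ℤ) (n : ℕ) : ones x a n ≤ n := by
  unfold ones
  refine (Finset.sum_le_card_nsmul _ _ 1 fun i _ => ?_).trans (by simp)
  split_ifs <;> simp

theorem ones_eq_zero {x : FullShift 2} {a : ℤ} {n : ℕ}
    (h : ∀ l : ℕ, l < n → x (a + l) = 0) : ones x a n = 0 := by
  refine Finset.sum_eq_zero fun i hi => ?_
  simp [h i (Finset.mem_range.mp hi)]

theorem length_exG (k : ℕ) : (exG k).length = 4 * (k + 1) := by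
  simp [exG]
  ring

theorem getElem_exG (k l : ℕ) (hl : l < (exG k).length) :
    (exG k)[l] = if l < 3 * (k + 1) then 0 else 1 := by
  simp only [exG, List.getElem_append, List.length_replicate, List.getElem_replicate]
  split_ifs <;> rfl

/-- Parsing into the generators `exG k`, `k ∈ K`, with the blocks spelled out. -/
theorem isParsing_exG_iff {K : Set ℕ} {x : FullShift 2} {p : ℤ → ℤ} :
    IsParsing (exG '' K) x p ↔ StrictMono p ∧ ∀ j : ℤ, ∃ k ∈ K,
      p (j + 1) = p j + 4 * (k + 1) ∧
        ∀ l : ℕ, l < 4 * (k + 1) → x (p j + l) = if l < 3 * (k + 1) then 0 else 1 := by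
  refine and_congr_right fun _ => forall_congr' fun j => ?_
  rw [Set.exists_mem_image]
  refine exists_congr fun k => and_congr_right fun _ => ?_
  simp only [getElem_exG, length_exG]
  push_cast
  rfl

/-- From a cut point onwards, at most a quarter of the symbols are `1`s. -/
theorem four_mul_ones_le {K : Set ℕ} {x : FullShift 2} {p : ℤ → ℤ}
    (hp : IsParsing (exG '' K) x p) (n : ℕ) (j : ℤ) : 4 * ones x (p j) n ≤ n := by
  induction n using Nat.strong_induction_on generalizing j with
  | _ n ih =>
    obtain ⟨k, -, hnext, hblock⟩ := (isParsing_exG_iff.mp hp).2 j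
    have hprefix : ∀ m ≤ 4 * (k + 1), ones x (p j) m ≤ m - 3 * (k + 1) := by
      intro m hm
      rcases le_total m (3 * (k + 1)) with h | h
      · rw [ones_eq_zero fun l hl => by rw [hblock l (by omega), if_pos (by omega)]]
        exact Nat.zero_le _
      · obtain ⟨r, rfl⟩ := Nat.exists_eq_add_of_le h
        rw [ones_add, ones_eq_zero fun l hl => by rw [hblock l (by omega), if_pos (by omega)]]
        have := ones_le x (p j + (3 * (k + 1) : ℕ)) r
        omega
    rcases lt_or_ge n (4 * (k + 1)) with h | h
    · have := hprefix n h.le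
      omega
    · obtain ⟨r, rfl⟩ := Nat.exists_eq_add_of_le h
      have h1 := hprefix _ le_rfl
      have h2 := ih r (by omega) (j + 1)
      rw [hnext] at h2
      rw [ones_add]
      push_cast at h1 h2 ⊢
      omega

theorem exists_cut_around_zero {p : ℤ → ℤ} (hp : StrictMono p) :
    ∃ j : ℤ, p j ≤ 0 ∧ 0 < p (j + 1) := by
  have hup : ∀ n : ℕ, ∀ j, p j + n ≤ p (j + n) := by
    intro n
    induction n with
    | zero => simp
    | succ n ih =>
      intro j
      have h1 := ih j
      have h2 := hp (show j + n < j + (n + 1 : ℕ) by push_cast; omega)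
      push_cast at h2 ⊢
      omega
  obtain ⟨j, hj, hmax⟩ := Int.exists_greatest_of_bdd (P := fun j => p j ≤ 0)
    ⟨(p 0).natAbs, fun z hz => by
      by_contra hlt
      have h1 := hup (p 0).natAbs 0
      have h2 := hp (not_le.mp hlt)
      rw [zero_add] at h1
      omega⟩
    ⟨-(p 0).natAbs, by
      have h1 := hup (p 0).natAbs (-(p 0).natAbs)
      rw [neg_add_cancel] at h1
      omega⟩
  refine ⟨j, hj, ?_⟩
  by_contra h
  have := hmax (j + 1) (not_lt.mp h)
  omega

/-- The nonnegative half of a point of `X_seq` starts with an end segment `0 ^ i 1 ^ (t - i)` of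
a generator, after which at most a quarter of the symbols are `1`s. -/
theorem exists_initial_segment {K : Set ℕ} {x : FullShift 2} (hx : x ∈ Xseq (exG '' K)) :
    ∃ k ∈ K, ∃ i t : ℕ, i ≤ t ∧ t ≤ 4 * (k + 1) ∧
      (∀ l : ℕ, l < t → x l = if l < i then 0 else 1) ∧
      ∀ n, 4 * ones x t n ≤ n := by
  obtain ⟨p, hp⟩ := hx
  obtain ⟨hmono, hblocks⟩ := isParsing_exG_iff.mp hp
  obtain ⟨j, hj, hj'⟩ := exists_cut_around_zero hmono
  obtain ⟨k, hk, hnext, hblock⟩ := hblocks j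
  refine ⟨k, hk, (p j + 3 * (k + 1)).toNat, (p (j + 1)).toNat, by omega, by omega, ?_, ?_⟩
  · intro l hl
    have h := hblock (l - p j).toNat (by omega)
    rw [show p j + ((l - p j).toNat : ℤ) = l by omega] at h
    rw [h]
    congr 1
    apply propext
    omega
  · intro n
    rw [Int.toNat_of_nonneg hj'.le]
    exact four_mul_ones_le hp n (j + 1)

/-- Points of `X_seq` with a long run of `1`s around the origin approximate `1^∞`. -/
theorem const_one_mem_codedShift : (fun _ => 1 : FullShift 2) ∈ codedShift (Set.range exG) := by
  let x : ℕ → FullShift 2 := fun N j =>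
    if (j + 3 * (2 * N + 1) + N) % (4 * (2 * N + 1)) < 3 * (2 * N + 1) then 0 else 1
  refine mem_closure_of_tendsto (f := x) (b := atTop) ?_ (Eventually.of_forall fun N => ?_)
  · refine tendsto_pi_nhds.mpr fun j => tendsto_const_nhds.congr' ?_
    filter_upwards [eventually_ge_atTop j.natAbs] with N hN
    simp only [x]
    rw [Int.emod_eq_of_lt (by omega) (by omega), if_neg (by omega)]
  · refine ⟨fun j => 4 * (2 * N + 1) * j - 3 * (2 * N + 1) - N, ?_⟩
    rw [← Set.image_univ, isParsing_exG_iff]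
    refine ⟨fun a b hab => ?_, fun j => ⟨2 * N, trivial, ?_, fun l hl => ?_⟩⟩
    · have : (4 * (2 * N + 1) : ℤ) * a < 4 * (2 * N + 1) * b :=
        mul_lt_mul_of_pos_left hab (by positivity)
      simp only
      omega
    · push_cast
      ring
    · simp only [x]
      rw [show (4 * (2 * N + 1) * j - 3 * (2 * N + 1) - N + l + 3 * (2 * N + 1) + N : ℤ)
        = l + 4 * (2 * N + 1) * j by ring, Int.add_mul_emod_self_left,
        Int.emod_eq_of_lt (by omega) (by omega)]
      congr 1
      apply propext
      omega

theorem cyl_eq_preimage {d n : ℕ} (w : Fin n → Fin d) :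
    cyl w = (fun (x : FullShift d) (i : Fin n) => x ((i : ℕ) : ℤ)) ⁻¹' {w} := by
  ext x
  simp [cyl, funext_iff]

theorem isOpen_cyl {d n : ℕ} (w : Fin n → Fin d) : IsOpen (cyl w) := by
  rw [cyl_eq_preimage]
  exact (isOpen_discrete {w}).preimage (by fun_prop)

theorem ones_eq_of_mem_cyl {n : ℕ} {w : Fin n → Fin 2} {x y : FullShift 2}
    (hx : x ∈ cyl w) (hy : y ∈ cyl w) : ones x 0 n = ones y 0 n := by
  refine Finset.sum_congr rfl fun i hi => ?_
  rw [zero_add, hx ⟨i, Finset.mem_range.mp hi⟩, hy ⟨i, Finset.mem_range.mp hi⟩]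

theorem sSup_birkhoff_eq {n : ℕ} {X : Set (FullShift 2)} {w : Fin n → Fin 2} {y : FullShift 2}
    (hX : (X ∩ cyl w).Nonempty) (hy : y ∈ cyl w) :
    sSup (birkhoff exφ n '' (X ∩ cyl w)) = ones y 0 n := by
  obtain ⟨z, hz⟩ := hX
  have : birkhoff exφ n '' (X ∩ cyl w) = {(ones y 0 n : ℝ)} := by
    refine Set.eq_singleton_iff_unique_mem.mpr ⟨⟨z, hz, ?_⟩, ?_⟩
    · rw [birkhoff_exφ, ones_eq_of_mem_cyl hz.2 hy]
    · rintro _ ⟨x, hx, rfl⟩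
      rw [birkhoff_exφ, ones_eq_of_mem_cyl hx.2 hy]
  rw [this, csSup_singleton]

/-- A bound on the terms of the partition function of a coded shift, to be checked only on
points of `X_seq`. -/
theorem Zfun_codedShift_le {𝒢 : Set (List (Fin 2))} {n : ℕ} {F : (Fin n → Fin 2) → ℝ}
    (hF₀ : ∀ w, 0 ≤ F w)
    (hF : ∀ w, ∀ x ∈ Xseq 𝒢 ∩ cyl w, Real.exp (ones x 0 n) ≤ F w) :
    Zfun (codedShift 𝒢) exφ n ≤ ∑ w, F w := by
  refine Finset.sum_le_sum fun w _ => ?_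
  split_ifs with h
  · obtain ⟨x, hx⟩ := (closure_inter_open_nonempty_iff (isOpen_cyl w)).mp h
    rw [sSup_birkhoff_eq h hx.2]
    exact hF w x hx
  · exact hF₀ w

theorem Zfun_eq_zero_or_one_le (X : Set (FullShift 2)) (n : ℕ) :
    Zfun X exφ n = 0 ∨ 1 ≤ Zfun X exφ n := by
  by_cases h : ∃ w : Fin n → Fin 2, (X ∩ cyl w).Nonempty
  · obtain ⟨w, hw⟩ := h
    right
    obtain ⟨y, hy⟩ := id hw
    refine le_trans ?_ (Finset.single_le_sum (fun v _ => ?_) (Finset.mem_univ w))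
    · rw [if_pos hw, sSup_birkhoff_eq hw hy.2]
      exact Real.one_le_exp (Nat.cast_nonneg _)
    · split_ifs <;> positivity
  · push Not at h
    left
    exact Finset.sum_eq_zero fun w _ => by rw [if_neg (by simp [h w])]

theorem bddBelow_pressure_range (X : Set (FullShift 2)) :
    BddBelow (Set.range fun n : ℕ => (1 / (n + 1 : ℝ)) * Real.log (Zfun X exφ (n + 1))) := by
  refine ⟨0, ?_⟩
  rintro _ ⟨n, rfl⟩
  refine mul_nonneg (by positivity) ?_
  rcases Zfun_eq_zero_or_one_le X (n + 1) with h | h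
  · simp [h]
  · exact Real.log_nonneg h

theorem pressure_le_of_Zfun_le {X : Set (FullShift 2)} {c C : ℝ} (hc : 0 ≤ c) (hC : 1 ≤ C)
    (h : ∀ n, Zfun X exφ n ≤ C * (n + 1) ^ 2 * Real.exp (n * c)) : pressure X exφ ≤ c := by
  have hlim : Tendsto (fun n : ℕ => c + (Real.log C * (1 / (n + 1 : ℝ))
      + 2 * (Real.log ((n + 1 : ℕ) + 1) / (n + 1 : ℕ)))) atTop (𝓝 c) := by
    have h1 := (tendsto_one_div_add_atTop_nhds_zero_nat (𝕜 := ℝ)).const_mul (Real.log C)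
    have h2 : Tendsto (fun x : ℝ => Real.log (x + 1) / x) atTop (𝓝 0) := by
      have h3 : Tendsto (fun x : ℝ => Real.log (x + 1) / (1 * (x + 1) + -1)) atTop (𝓝 0) := by
        simpa only [pow_one, Function.comp_def, id_eq] using
          (Real.tendsto_pow_log_div_mul_add_atTop 1 (-1) 1 one_ne_zero).comp
            (tendsto_atTop_add_const_right atTop (1 : ℝ) tendsto_id)
      refine h3.congr fun x => ?_
      ring_nf
    have h4 := (h2.comp ((tendsto_natCast_atTop_atTop (R := ℝ)).comp
      (tendsto_add_atTop_nat 1))).const_mul 2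
    simpa using (h1.add h4).const_add c
  refine ge_of_tendsto' hlim fun n => (ciInf_le (bddBelow_pressure_range X) n).trans ?_
  have hn : (0 : ℝ) < (n + 1 : ℕ) := by positivity
  have hB : Real.log (C * ((n + 1 : ℕ) + 1) ^ 2 * Real.exp ((n + 1 : ℕ) * c))
      = Real.log C + 2 * Real.log ((n + 1 : ℕ) + 1) + (n + 1 : ℕ) * c := by
    rw [Real.log_mul (by positivity) (by positivity), Real.log_mul (by positivity) (by positivity),
      Real.log_exp, Real.log_pow]
    norm_num
  have hZ : Real.log (Zfun X exφ (n + 1))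
      ≤ Real.log C + 2 * Real.log ((n + 1 : ℕ) + 1) + (n + 1 : ℕ) * c := by
    rcases Zfun_eq_zero_or_one_le X (n + 1) with h0 | h1
    · rw [h0, Real.log_zero]
      have h2 := Real.log_nonneg hC
      have h3 := Real.log_nonneg (show (1 : ℝ) ≤ (n + 1 : ℕ) + 1 by linarith)
      positivity
    · rw [← hB]
      exact Real.log_le_log (by linarith) (h (n + 1))
  calc (1 / (n + 1 : ℝ)) * Real.log (Zfun X exφ (n + 1))
      ≤ (1 / (n + 1 : ℝ)) * (Real.log C + 2 * Real.log ((n + 1 : ℕ) + 1) + (n + 1 : ℕ) * c) := by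
        gcongr
    _ = _ := by
        push_cast
        field_simp
        ring

theorem exp_le_of_initial_segment {x : FullShift 2} {t r : ℕ} (h : 4 * ones x t r ≤ r) :
    Real.exp (ones x 0 (t + r)) ≤ Real.exp (t + r / 4) := by
  have h1 := ones_le x 0 t
  have h2 : 4 * ones x 0 (t + r) ≤ 4 * t + r := by
    rw [ones_add, zero_add]
    omega
  have h3 : (4 * ones x 0 (t + r) : ℝ) ≤ 4 * t + r := by exact_mod_cast h2
  exact Real.exp_le_exp.mpr (by linarith)

theorem ones_le_of_mem_Xseq {K : Set ℕ} {x : FullShift 2} (hx : x ∈ Xseq (exG '' K)) :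
    ∃ k ∈ K, ∀ n : ℕ, (ones x 0 n : ℝ) ≤ 4 * (k + 1) + n / 4 := by
  obtain ⟨k, hk, i, t, -, ht, -, h⟩ := exists_initial_segment hx
  refine ⟨k, hk, fun n => ?_⟩
  have h2 : 4 * ones x 0 n ≤ 4 * (4 * (k + 1)) + n := by
    rcases le_total n t with hn | hn
    · have := ones_le x 0 n
      omega
    · obtain ⟨r, rfl⟩ := Nat.exists_eq_add_of_le hn
      rw [ones_add, zero_add]
      have := ones_le x 0 t
      have := h r
      omega
  have h3 : (4 * ones x 0 n : ℝ) ≤ 4 * (4 * (k + 1)) + n := by exact_mod_cast h2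
  linarith

theorem pressure_finite_le (m : ℕ) :
    pressure (codedShift (exG '' {i | i < m})) exφ ≤ 1 / 4 + Real.log 2 := by
  have hlog : 0 ≤ Real.log 2 := Real.log_nonneg one_le_two
  refine pressure_le_of_Zfun_le (C := Real.exp (4 * m)) (by positivity)
    (Real.one_le_exp (by positivity)) fun n => ?_
  calc Zfun (codedShift (exG '' {i | i < m})) exφ n
      ≤ ∑ _w : Fin n → Fin 2, Real.exp (4 * m + n / 4) := by
        refine Zfun_codedShift_le (fun _ => by positivity) fun w x hx => ?_
        obtain ⟨k, hk, h⟩ := ones_le_of_mem_Xseq hx.1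
        have hk' : ((k + 1 : ℕ) : ℝ) ≤ m := by exact_mod_cast hk
        push_cast at hk'
        exact Real.exp_le_exp.mpr (by linarith [h n])
    _ = Real.exp (4 * m) * 1 * Real.exp (n * (1 / 4 + Real.log 2)) := by
        have h2 : Real.exp (n * Real.log 2) = 2 ^ n := by
          rw [Real.exp_nat_mul, Real.exp_log two_pos]
        simp only [Finset.sum_const, Finset.card_univ, Fintype.card_fun, Fintype.card_fin,
          nsmul_eq_mul, Nat.cast_pow, Nat.cast_ofNat]
        rw [mul_add (n : ℝ), Real.exp_add, Real.exp_add, h2]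
        ring_nf
    _ ≤ _ := by
        gcongr
        exact one_le_pow₀ (by linarith [Nat.cast_nonneg (α := ℝ) n])

theorem quarter_add_log_two_lt_one : 1 / 4 + Real.log 2 < 1 := by
  linarith [Real.log_two_lt_d9]

theorem card_filter_prefix_le {n t : ℕ} (u : Fin n → Fin 2) :
    (Finset.univ.filter fun w : Fin n → Fin 2 => ∀ l : Fin n, (l : ℕ) < t → w l = u l).card
      ≤ 2 ^ (n - t) := by
  have hcard : 2 ^ (n - t) = Fintype.card (Fin (n - t) → Fin 2) := by simp
  rw [hcard]
  refine Finset.card_le_card_of_injOn (t := Finset.univ)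
    (fun w s => w ⟨t + s, by omega⟩) (fun _ _ => Finset.mem_univ _) ?_
  intro w hw v hv hwv
  simp only [Finset.coe_filter, Finset.mem_univ, true_and, Set.mem_ofPred_eq] at hw hv
  funext l
  rcases lt_or_ge (l : ℕ) t with h | h
  · rw [hw l h, hv l h]
  · have := congrFun hwv ⟨l - t, by omega⟩
    simpa [Nat.add_sub_cancel' h] using this

theorem sum_prefix_weight_le {n t : ℕ} (ht : t ≤ n) (u : Fin n → Fin 2) :
    (∑ w : Fin n → Fin 2, if ∀ l : Fin n, (l : ℕ) < t → w l = u l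
      then Real.exp (t + (n - t : ℕ) / 4) else 0) ≤ Real.exp n := by
  rw [← Finset.sum_filter, Finset.sum_const, nsmul_eq_mul]
  calc _ ≤ (2 ^ (n - t) : ℝ) * Real.exp (t + (n - t : ℕ) / 4) := by
        gcongr
        exact_mod_cast card_filter_prefix_le u
    _ = Real.exp (t + (n - t : ℕ) * (1 / 4 + Real.log 2)) := by
        have h2 : Real.exp ((n - t : ℕ) * Real.log 2) = 2 ^ (n - t) := by
          rw [Real.exp_nat_mul, Real.exp_log two_pos]
        rw [← h2, ← Real.exp_add]
        ring_nf
    _ ≤ Real.exp (t + (n - t : ℕ) * 1) := by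
        gcongr
        exact quarter_add_log_two_lt_one.le
    _ = Real.exp n := by
        rw [Nat.cast_sub ht]
        ring_nf

theorem Zfun_le (n : ℕ) :
    Zfun (codedShift (Set.range exG)) exφ n ≤ (n + 1) ^ 2 * Real.exp n := by
  let u : ℕ → Fin n → Fin 2 := fun i l => if (l : ℕ) < i then 0 else 1
  let F : ℕ × ℕ → (Fin n → Fin 2) → ℝ := fun q w =>
    if ∀ l : Fin n, (l : ℕ) < q.2 → w l = u q.1 l then Real.exp (q.2 + (n - q.2 : ℕ) / 4) else 0
  have hF₀ : ∀ q w, 0 ≤ F q w := fun q w => by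
    simp only [F]
    split_ifs <;> positivity
  let Q := Finset.range (n + 1) ×ˢ Finset.range (n + 1)
  calc Zfun (codedShift (Set.range exG)) exφ n
      ≤ ∑ w, ∑ q ∈ Q, F q w := by
        rw [← Set.image_univ]
        refine Zfun_codedShift_le (fun w => Finset.sum_nonneg fun q _ => hF₀ q w) fun w x hx => ?_
        obtain ⟨k, -, i, t, hit, -, hseg, hones⟩ := exists_initial_segment hx.1
        have hq : (min i n, min t n) ∈ Q := by
          simp only [Q, Finset.mem_product, Finset.mem_range]
          omega
        refine le_trans ?_ (Finset.single_le_sum (fun q _ => hF₀ q w) hq)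
        simp only [F]
        rw [if_pos fun l hl => by
          rw [← hx.2 l, hseg l (by omega)]
          simp only [u]
          congr 1
          apply propext
          omega]
        have key := exp_le_of_initial_segment (x := x) (t := min t n) (r := n - min t n) ?_
        · rwa [Nat.add_sub_cancel' (min_le_right t n)] at key
        · rcases le_total t n with h | h
          · rw [min_eq_left h]
            exact hones _
          · simp [min_eq_right h, ones]
    _ = ∑ q ∈ Q, ∑ w, F q w := Finset.sum_comm
    _ ≤ ∑ _q ∈ Q, Real.exp n := by
        refine Finset.sum_le_sum fun q hq => sum_prefix_weight_le ?_ (u q.1)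
        simp only [Q, Finset.mem_product, Finset.mem_range] at hq
        omega
    _ = (n + 1) ^ 2 * Real.exp n := by
        simp [Q, sq]

theorem le_Zfun {X : Set (FullShift 2)} (hX : (fun _ => 1) ∈ X) (n : ℕ) :
    Real.exp n ≤ Zfun X exφ n := by
  have hcyl : (fun _ => 1 : FullShift 2) ∈ cyl (fun _ : Fin n => (1 : Fin 2)) := fun _ => rfl
  have hne : (X ∩ cyl (fun _ : Fin n => (1 : Fin 2))).Nonempty := ⟨_, hX, hcyl⟩
  refine le_trans ?_ (Finset.single_le_sum (fun v _ => ?_)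
    (Finset.mem_univ fun _ : Fin n => (1 : Fin 2)))
  · rw [if_pos hne, sSup_birkhoff_eq hne hcyl]
    simp [ones]
  · split_ifs <;> positivity

theorem pressure_eq_one : pressure (codedShift (Set.range exG)) exφ = 1 := by
  refine le_antisymm (pressure_le_of_Zfun_le zero_le_one le_rfl fun n => ?_) ?_
  · simpa using Zfun_le n
  · refine le_ciInf fun n => ?_
    have h := Real.log_le_log (Real.exp_pos _) (le_Zfun const_one_mem_codedShift (n + 1))
    rw [Real.log_exp] at h
    push_cast at h
    rw [one_div, inv_mul_eq_div, le_div_iff₀ (by positivity)]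
    linarith

theorem measurableSet_cyl {d n : ℕ} (w : Fin n → Fin d) : MeasurableSet (cyl w) := by
  rw [cyl_eq_preimage]
  exact (measurableSet_singleton w).preimage (by fun_prop)

theorem measurable_shift (d : ℕ) : Measurable (shift d) :=
  measurable_pi_lambda _ fun k => measurable_pi_apply (k + 1)

theorem measurable_exφ : Measurable exφ :=
  (Measurable.of_discrete (f := fun a : Fin 2 => if a = 1 then (1 : ℝ) else 0)).comp
    (measurable_pi_apply (0 : ℤ))

theorem mEnt_dirac {d : ℕ} (y : FullShift d) : mEnt (Measure.dirac y) = 0 := by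
  have h : ∀ n : ℕ, ∀ w : Fin n → Fin d,
      Real.negMulLog ((Measure.dirac y) (cyl w)).toReal = 0 := by
    intro n w
    rw [Measure.dirac_apply' _ (measurableSet_cyl w)]
    by_cases hy : y ∈ cyl w <;> simp [hy]
  simp only [mEnt, h, Finset.sum_const_zero, mul_zero, liminf_const]

theorem isEqState_dirac : IsEqState (codedShift (Set.range exG)) exφ
    (Measure.dirac (fun _ => (1 : Fin 2))) := by
  refine ⟨⟨inferInstance, ?_, Measure.dirac_apply_of_mem const_one_mem_codedShift⟩, ?_⟩
  · rw [Measure.map_dirac' (measurable_shift 2)]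
    rfl
  · rw [freeEnergy, mEnt_dirac, integral_dirac, pressure_eq_one]
    simp [exφ]

theorem sum_negMulLog_le_log_card {ι : Type*} [Fintype ι] {q : ι → ℝ} (h₀ : ∀ i, 0 ≤ q i)
    (h₁ : ∑ i, q i = 1) : ∑ i, Real.negMulLog (q i) ≤ Real.log (Fintype.card ι) := by
  have hne : Nonempty ι := by
    by_contra h
    rw [not_nonempty_iff] at h
    simp at h₁
  have hN : (0 : ℝ) < Fintype.card ι := by exact_mod_cast Fintype.card_pos
  have h := Real.concaveOn_negMulLog.le_map_sum (t := Finset.univ)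
    (w := fun _ : ι => (Fintype.card ι : ℝ)⁻¹) (p := q) (fun _ _ => by positivity)
    (by simp [hN.ne']) (fun i _ => h₀ i)
  simp only [smul_eq_mul, ← Finset.mul_sum, h₁, mul_one] at h
  rw [Real.negMulLog, Real.log_inv, neg_mul_neg] at h
  exact le_of_mul_le_mul_left h (by positivity)

theorem mEnt_le_log (d : ℕ) (μ : Measure (FullShift d)) [IsProbabilityMeasure μ] :
    mEnt μ ≤ Real.log d := by
  have hbound : ∀ n : ℕ, (1 / (n + 1 : ℝ)) *
      ∑ w : Fin (n + 1) → Fin d, Real.negMulLog (μ (cyl w)).toReal ≤ Real.log d := by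
    intro n
    have hsum : ∑ w : Fin (n + 1) → Fin d, (μ (cyl w)).toReal = 1 := by
      have h := sum_measureReal_preimage_singleton (μ := μ)
        (Finset.univ : Finset (Fin (n + 1) → Fin d))
        (f := fun (x : FullShift d) (i : Fin (n + 1)) => x ((i : ℕ) : ℤ))
        (fun w _ => cyl_eq_preimage w ▸ measurableSet_cyl w)
      simpa [← cyl_eq_preimage, measureReal_def] using h
    have h := sum_negMulLog_le_log_card (fun w => ENNReal.toReal_nonneg) hsum
    simp only [Fintype.card_fun, Fintype.card_fin, Nat.cast_pow, Real.log_pow] at h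
    push_cast at h
    rw [one_div, inv_mul_eq_div, div_le_iff₀ (by positivity)]
    linarith
  refine liminf_le_of_le ⟨0, ?_⟩ fun b hb => ?_
  · refine eventually_map.mpr (Eventually.of_forall fun n => ?_)
    refine mul_nonneg (by positivity) (Finset.sum_nonneg fun w _ => ?_)
    exact Real.negMulLog_nonneg ENNReal.toReal_nonneg
      (ENNReal.toReal_le_of_le_ofReal zero_le_one (by simpa using prob_le_one))
  · obtain ⟨n, hn⟩ := hb.exists
    exact hn.trans (hbound n)

theorem integral_birkhoff {d : ℕ} {μ : Measure (FullShift d)} (hμ : μ.map (shift d) = μ)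
    {φ : FullShift d → ℝ} (hφ : Integrable φ μ) (n : ℕ) :
    ∫ x, birkhoff φ n x ∂μ = n * ∫ x, φ x ∂μ := by
  have hmp : ∀ k, MeasurePreserving ((shift d)^[k]) μ μ :=
    fun k => MeasurePreserving.iterate ⟨measurable_shift d, hμ⟩ k
  have hk : ∀ k, ∫ x, φ ((shift d)^[k] x) ∂μ = ∫ x, φ x ∂μ := fun k => by
    have h := integral_map (hmp k).aemeasurable (f := φ)
      (by rw [(hmp k).map_eq]; exact hφ.aestronglyMeasurable)
    rw [← h, (hmp k).map_eq]
  simp only [birkhoff]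
  rw [integral_finsetSum (f := fun k x => φ ((shift d)^[k] x)) _
    fun k _ => (hmp k).integrable_comp_of_integrable hφ]
  simp [hk]

/-- An invariant measure carried by `X_seq` gives the symbol `1` frequency at most `1/4`. -/
theorem integral_exφ_le {μ : Measure (FullShift 2)} [IsProbabilityMeasure μ]
    (hμ : μ.map (shift 2) = μ) (hX : μ (Xseq (Set.range exG)) = 1) :
    ∫ x, exφ x ∂μ ≤ 1 / 4 := by
  have hmeas : ∀ n, Measurable (birkhoff exφ n) := fun n =>
    Finset.measurable_sum _ fun k _ => measurable_exφ.comp ((measurable_shift 2).iterate k)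
  have hnn : ∀ n x, 0 ≤ birkhoff exφ n x := fun n x => by
    rw [birkhoff_exφ]
    positivity
  have hle : ∀ n x, birkhoff exφ n x ≤ n := fun n x => by
    rw [birkhoff_exφ]
    exact_mod_cast ones_le x 0 n
  let g : ℕ → FullShift 2 → ℝ := fun n x => max (birkhoff exφ (n + 1) x / (n + 1)) (1 / 4)
  have hg : ∀ n, Measurable (g n) := fun n => ((hmeas _).div_const _).max measurable_const
  have hg_le : ∀ n x, ‖g n x‖ ≤ 1 := fun n x => by
    have h := hle (n + 1) x
    push_cast at h
    rw [Real.norm_of_nonneg (le_max_of_le_right (by norm_num))]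
    exact max_le ((div_le_one (by positivity)).mpr h) (by norm_num)
  have hg_lim : ∀ x ∈ Xseq (Set.range exG), Tendsto (fun n => g n x) atTop (𝓝 (1 / 4)) := by
    intro x hx
    rw [← Set.image_univ] at hx
    obtain ⟨k, -, h⟩ := ones_le_of_mem_Xseq hx
    have hlim : Tendsto (fun n : ℕ => 4 * (k + 1) * (1 / (n + 1 : ℝ)) + 1 / 4) atTop
        (𝓝 (1 / 4)) := by
      simpa only [mul_zero, zero_add] using
        ((tendsto_one_div_add_atTop_nhds_zero_nat (𝕜 := ℝ)).const_mul
          (4 * (k + 1 : ℝ))).add_const (1 / 4)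
    refine tendsto_of_tendsto_of_tendsto_of_le_of_le tendsto_const_nhds hlim
      (fun n => le_max_right _ _) fun n => max_le ?_ ?_
    · have h' := h (n + 1)
      rw [birkhoff_exφ, div_le_iff₀ (by positivity)]
      push_cast at h'
      refine h'.trans (le_of_eq ?_)
      field_simp
    · have : (0 : ℝ) ≤ 4 * (k + 1) * (1 / (n + 1 : ℝ)) := by positivity
      linarith
  have hae : ∀ᵐ x ∂μ, Tendsto (fun n => g n x) atTop (𝓝 (1 / 4)) := by
    have hE : MeasurableSet {x | Tendsto (fun n => g n x) atTop (𝓝 (1 / 4))} :=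
      measurableSet_tendsto _ hg
    refine (mem_ae_iff_prob_eq_one hE).mpr (le_antisymm prob_le_one ?_)
    rw [← hX]
    exact measure_mono hg_lim
  have hlim := tendsto_integral_of_dominated_convergence (fun _ => (1 : ℝ))
    (fun n => (hg n).aestronglyMeasurable) (integrable_const 1)
    (fun n => Eventually.of_forall (hg_le n)) hae
  rw [integral_const, probReal_univ, one_smul] at hlim
  refine ge_of_tendsto' hlim fun n => ?_
  have hint : Integrable exφ μ := by
    refine Integrable.of_bound measurable_exφ.aestronglyMeasurable 1
      (Eventually.of_forall fun x => ?_)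
    simp only [exφ]
    split_ifs <;> simp
  have hn : (0 : ℝ) < n + 1 := by positivity
  calc ∫ x, exφ x ∂μ = ∫ x, birkhoff exφ (n + 1) x / (n + 1) ∂μ := by
        rw [integral_div, integral_birkhoff hμ hint]
        push_cast
        field_simp
    _ ≤ ∫ x, g n x ∂μ := by
        refine integral_mono_of_nonneg (Eventually.of_forall fun x => ?_)
          (Integrable.of_bound (hg n).aestronglyMeasurable 1 (Eventually.of_forall (hg_le n)))
          (Eventually.of_forall fun x => le_max_left _ _)
        exact div_nonneg (hnn _ x) hn.le

theorem PseqOf_le : PseqOf (codedShift (Set.range exG)) (Xseq (Set.range exG)) exφ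
    ≤ 1 / 4 + Real.log 2 := by
  have hlog : 0 ≤ Real.log 2 := Real.log_nonneg one_le_two
  refine Real.sSup_le ?_ (by positivity)
  rintro _ ⟨μ, ⟨hprob, hinv, -⟩, hX, rfl⟩
  have h1 := mEnt_le_log 2 μ
  have h2 := integral_exφ_le hinv hX
  rw [freeEnergy]
  push_cast at h1
  linarith

/-- for the coded shift generated by `{(000)^k 1^k : k ∈ ℕ}` and the
indicator potential of `{x_0 = 1}`: `P_top(X,φ) = 1`, attained by the Dirac measure at
the fixed point `1^∞`; `P_seq(φ) ≤ 1/4 + log 2 < 1`; each finite approximation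
satisfies `P_top(X_m,φ) ≤ 1/4 + log 2`; and `φ ∉ FSP(X)`, i.e.
`P_seq(φ) < P_top(X,φ)`. -/
theorem statement17 :
    pressure (codedShift (Set.range exG)) exφ = 1 ∧
      IsEqState (codedShift (Set.range exG)) exφ
        (Measure.dirac (fun _ => (1 : Fin 2))) ∧
      PseqOf (codedShift (Set.range exG)) (Xseq (Set.range exG)) exφ
        ≤ 1 / 4 + Real.log 2 ∧
      1 / 4 + Real.log 2 < 1 ∧
      (∀ m : ℕ, pressure (codedShift (exG '' {i | i < m})) exφ ≤ 1 / 4 + Real.log 2) ∧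
      PseqOf (codedShift (Set.range exG)) (Xseq (Set.range exG)) exφ
        < pressure (codedShift (Set.range exG)) exφ := by
  exact ⟨pressure_eq_one, isEqState_dirac, PseqOf_le, quarter_add_log_two_lt_one, pressure_finite_le,
    pressure_eq_one ▸ PseqOf_le.trans_lt quarter_add_log_two_lt_one⟩

end PaperStmt
end
end
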